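/- arXiv:1904.00848 — 3 statements merged into one kernel-verified Lean document; each statement's English description precedes it below -/
import Mathlib

section
/- Let λ, γ ∈ ℂ with γ ≠ 0, and let (λ_n)_{n≥1}, (γ_n)_{n≥1} be sequences of complex numbers with λ_n → λ and γ_n → γ as n → ∞. Then the functions z ↦ γ_n/(λ_n − z) converge to the function z ↦ γ/(λ − z) uniformly on all of ℂ, with respect to the chordal distance d on the Riemann sphere (each function taking the value ∞ at its pole). -/
/-!
Write `γ / (λ - z)` in homogeneous coordinates as `[γ : λ - z]`. For nonzero `u, v ∈ ℂ²` the
chordal distance of `[u]` and `[v]` is `|det (u, v)| / (‖u‖ ‖v‖)`, and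
`det (u, v) = det (u, v - u)`, so it is at most `‖u - v‖ / ‖v‖`. For `u = (γₙ, λₙ - z)` and
`v = (γ, λ - z)` the difference `u - v` does not depend on `z`, while `‖v‖ ≥ |γ|`; this makes the
convergence uniform.
-/

open Filter Set Topology

attribute [local instance] Classical.propDecidable

/-- The chordal (spherical) distance on the Riemann sphere `ℂ ∪ {∞}`,
modelled as `Option ℂ` with `none` representing the point `∞`. -/
noncomputable def chordal : Option ℂ → Option ℂ → ℝ
  | none, none => 0
  | none, some b => 1 / Real.sqrt (1 + ‖b‖ ^ 2)
  | some a, none => 1 / Real.sqrt (1 + ‖a‖ ^ 2)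
  | some a, some b => ‖b - a‖ / Real.sqrt ((1 + ‖a‖ ^ 2) * (1 + ‖b‖ ^ 2))

/-- The point of the Riemann sphere with homogeneous coordinates `[w.fst : w.snd]`. The coordinate
vector is taken in the Hilbert space `ℂ²`, whose norm enters the homogeneous formula for the
chordal distance. The zero vector, which represents no point, is sent to `∞`. -/
noncomputable def spherePoint (w : WithLp 2 (ℂ × ℂ)) : Option ℂ :=
  if w.snd = 0 then none else some (w.fst / w.snd)

lemma norm_fst_mul_snd_sub_snd_mul_fst_le {R : Type*} [SeminormedRing R]
    (u v : WithLp 2 (R × R)) :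
    ‖u.fst * v.snd - u.snd * v.fst‖ ≤ ‖u‖ * ‖v‖ := by
  have cauchy_schwarz :
      (‖u.fst‖ * ‖v.snd‖ + ‖u.snd‖ * ‖v.fst‖) ^ 2 ≤ (‖u‖ * ‖v‖) ^ 2 := by
    rw [mul_pow, WithLp.prod_norm_sq_eq_of_L2, WithLp.prod_norm_sq_eq_of_L2]
    linarith [sq_nonneg (‖u.fst‖ * ‖v.fst‖ - ‖u.snd‖ * ‖v.snd‖)]
  calc ‖u.fst * v.snd - u.snd * v.fst‖
      ≤ ‖u.fst * v.snd‖ + ‖u.snd * v.fst‖ := norm_sub_le _ _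
    _ ≤ ‖u.fst‖ * ‖v.snd‖ + ‖u.snd‖ * ‖v.fst‖ := by gcongr <;> exact norm_mul_le _ _
    _ ≤ ‖u‖ * ‖v‖ := le_of_sq_le_sq cauchy_schwarz (by positivity)

lemma sqrt_one_add_norm_fst_div_snd_sq {𝕜 : Type*} [NormedDivisionRing 𝕜] {w : WithLp 2 (𝕜 × 𝕜)}
    (hw : w.snd ≠ 0) :
    Real.sqrt (1 + ‖w.fst / w.snd‖ ^ 2) = ‖w‖ / ‖w.snd‖ := by
  rw [Real.sqrt_eq_iff_eq_sq (by positivity) (by positivity), div_pow,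
    WithLp.prod_norm_sq_eq_of_L2, norm_div]
  field_simp
  ring

lemma chordal_comm (a b : Option ℂ) : chordal a b = chordal b a := by
  cases a <;> cases b <;> simp only [chordal, norm_sub_rev, mul_comm]

lemma chordal_none_spherePoint (w : WithLp 2 (ℂ × ℂ)) :
    chordal none (spherePoint w) = ‖w.snd‖ / ‖w‖ := by
  by_cases hw : w.snd = 0
  · simp [spherePoint, chordal, hw]
  · simp only [spherePoint, hw, if_false, chordal, sqrt_one_add_norm_fst_div_snd_sq hw, one_div_div]

lemma chordal_spherePoint_of_snd_eq_zero {u : WithLp 2 (ℂ × ℂ)} (hu : u ≠ 0)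
    (hu₂ : u.snd = 0) (v : WithLp 2 (ℂ × ℂ)) :
    chordal (spherePoint u) (spherePoint v) =
      ‖u.fst * v.snd - u.snd * v.fst‖ / (‖u‖ * ‖v‖) := by
  have norm_fst : ‖u.fst‖ = ‖u‖ := by simp [WithLp.prod_norm_eq_of_L2, hu₂]
  have point_eq : spherePoint u = none := if_pos hu₂
  rw [point_eq, chordal_none_spherePoint, hu₂, zero_mul, sub_zero, norm_mul, norm_fst,
    mul_div_mul_left _ _ (norm_ne_zero_iff.mpr hu)]

lemma chordal_spherePoint {u v : WithLp 2 (ℂ × ℂ)} (hu : u ≠ 0) (hv : v ≠ 0) :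
    chordal (spherePoint u) (spherePoint v) =
      ‖u.fst * v.snd - u.snd * v.fst‖ / (‖u‖ * ‖v‖) := by
  by_cases hu₂ : u.snd = 0
  · exact chordal_spherePoint_of_snd_eq_zero hu hu₂ v
  by_cases hv₂ : v.snd = 0
  · rw [chordal_comm, chordal_spherePoint_of_snd_eq_zero hv hv₂, norm_sub_rev,
      mul_comm ‖v‖, mul_comm v.snd, mul_comm v.fst]
  have sub_eq : v.fst / v.snd - u.fst / u.snd =
      -(u.fst * v.snd - u.snd * v.fst) / (u.snd * v.snd) := by
    field_simp
    ring
  simp only [spherePoint, hu₂, hv₂, if_false, chordal]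
  rw [Real.sqrt_mul (by positivity), sqrt_one_add_norm_fst_div_snd_sq hu₂,
    sqrt_one_add_norm_fst_div_snd_sq hv₂, sub_eq, norm_div, norm_neg, norm_mul, div_mul_div_comm,
    div_div_div_cancel_right₀ (by positivity)]

lemma chordal_spherePoint_le {u v : WithLp 2 (ℂ × ℂ)} (hu : u ≠ 0) (hv : v ≠ 0) :
    chordal (spherePoint u) (spherePoint v) ≤ ‖u - v‖ / ‖v‖ := by
  have det_eq : u.fst * v.snd - u.snd * v.fst = u.snd * (u - v).fst - u.fst * (u - v).snd := by
    simp only [WithLp.sub_fst, WithLp.sub_snd]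
    ring
  calc chordal (spherePoint u) (spherePoint v)
      = ‖u.fst * (u - v).snd - u.snd * (u - v).fst‖ / (‖u‖ * ‖v‖) := by
        rw [chordal_spherePoint hu hv, det_eq, norm_sub_rev]
    _ ≤ ‖u‖ * ‖u - v‖ / (‖u‖ * ‖v‖) := by
        gcongr
        exact norm_fst_mul_snd_sub_snd_mul_fst_le u (u - v)
    _ = ‖u - v‖ / ‖v‖ := mul_div_mul_left _ _ (norm_ne_zero_iff.mpr hu)

lemma spherePoint_toLp_sub (c a z : ℂ) :
    spherePoint (WithLp.toLp 2 (c, a - z)) = if z = a then none else some (c / (a - z)) := by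
  simp only [spherePoint, WithLp.toLp_fst, WithLp.toLp_snd, sub_eq_zero, eq_comm (a := a)]

lemma chordal_div_sub_le {c c' : ℂ} (hc : c ≠ 0) (hc' : c' ≠ 0) (a a' z : ℂ) :
    chordal (if z = a then none else some (c / (a - z)))
        (if z = a' then none else some (c' / (a' - z))) ≤
      ‖WithLp.toLp 2 (c - c', a - a')‖ / ‖c'‖ := by
  set u : WithLp 2 (ℂ × ℂ) := WithLp.toLp 2 (c, a - z) with hu_def
  set v : WithLp 2 (ℂ × ℂ) := WithLp.toLp 2 (c', a' - z) with hv_def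
  have hu : u ≠ 0 := fun h => hc (congrArg WithLp.fst h)
  have hv : v ≠ 0 := fun h => hc' (congrArg WithLp.fst h)
  have sub_eq : u - v = WithLp.toLp 2 (c - c', a - a') := by
    rw [hu_def, hv_def, ← WithLp.toLp_sub, Prod.mk_sub_mk, sub_sub_sub_cancel_right]
  have norm_le : ‖c'‖ ≤ ‖v‖ := WithLp.norm_fst_le ℂ v
  rw [← spherePoint_toLp_sub, ← spherePoint_toLp_sub, ← sub_eq]
  calc chordal (spherePoint u) (spherePoint v) ≤ ‖u - v‖ / ‖v‖ := chordal_spherePoint_le hu hv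
    _ ≤ ‖u - v‖ / ‖c'‖ := by gcongr

theorem single_pole_uniform_convergence_general {ι : Type*} {l : Filter ι} {lam γ : ℂ}
    (hγ : γ ≠ 0) {lamn γn : ι → ℂ} (hlamn : Tendsto lamn l (𝓝 lam)) (hγn : Tendsto γn l (𝓝 γ))
    {ε : ℝ} (hε : 0 < ε) :
    ∀ᶠ n in l, ∀ z : ℂ,
      chordal (if z = lamn n then none else some (γn n / (lamn n - z)))
        (if z = lam then none else some (γ / (lam - z))) < ε := by
  have bound_tendsto :
      Tendsto (fun n => ‖WithLp.toLp 2 (γn n - γ, lamn n - lam)‖ / ‖γ‖) l (𝓝 0) := by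
    have pair_tendsto :=
      (tendsto_sub_nhds_zero_iff.mpr hγn).prodMk_nhds (tendsto_sub_nhds_zero_iff.mpr hlamn)
    simpa using
      (((WithLp.prod_continuous_toLp 2 ℂ ℂ).tendsto _).comp pair_tendsto).norm.div_const ‖γ‖
  filter_upwards [bound_tendsto.eventually_lt_const hε, hγn.eventually_ne hγ] with n hlt hne z
  exact (chordal_div_sub_le hne hγ (lamn n) lam z).trans_lt hlt

/-- If `λ_n → λ` and `γ_n → γ ≠ 0`, then `z ↦ γ_n/(λ_n - z)` converges to
`z ↦ γ/(λ - z)` uniformly on all of `ℂ` for the chordal distance on the Riemann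
sphere, each function taking the value `∞` at its pole. -/
theorem single_pole_uniform_convergence
    (lam γ : ℂ) (hγ : γ ≠ 0) (lamn γn : ℕ → ℂ)
    (hlamn : Tendsto lamn atTop (𝓝 lam))
    (hγn : Tendsto γn atTop (𝓝 γ)) :
    ∀ ε : ℝ, 0 < ε → ∃ N : ℕ, ∀ n ≥ N, ∀ z : ℂ,
      chordal (if z = lamn n then none else some (γn n / (lamn n - z)))
        (if z = lam then none else some (γ / (lam - z))) < ε := by
  intro ε hε
  exact eventually_atTop.mp (single_pole_uniform_convergence_general hγ hlamn hγn hε)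
end

section
/- Let Ξ be a simple point measure on ℝ (a sum of Dirac masses at the points of a locally finite set L ⊂ ℝ). Fix α ∈ (0,1) and assume: (i) there are reals τ_ℓ > 0 for ℓ ≥ 1 with ∫_ℝ 1(|λ| > ℓ)/|λ|^{1+α} dΞ(λ) ≤ τ_ℓ; (ii) for every ℓ ≥ 1 the limit h_ℓ = lim_{ℓ'→∞} ∫_ℝ 1(ℓ < |λ| < ℓ')/λ dΞ(λ) exists. Let λ* ∈ ℝ∖L, let (γ_k)_{k∈ℤ} be strictly positive reals satisfying, for some γ̄, c > 0 and some α' with 0 < (1+α)α' < 1: |Σ_{k=0}^{m−1} γ_k − γ̄m| ≤ c m^{α'} and |Σ_{k=−m}^{−1} γ_k − γ̄m| ≤ c m^{α'} for all m ≥ 1, and let Λ be the weighted version of Ξ in which the k-th point of L after λ* carries weight γ_k for k ≥ 1, and the (1−k)-th point before λ* carries weight γ_k for k ≤ 0. Then for every z ∈ ℂ∖L the limit S(z) = lim_{ℓ→∞} ∫_{[−ℓ,ℓ]} 1/(λ − z) dΛ(λ) exists, and S is a meromorphic function on ℂ whose poles are exactly the points of L, each pole being simple. -/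
open Filter Set Topology BigOperators

attribute [local instance] Classical.propDecidable

/-- Weight attached to a point `x` of `L` relative to the reference point `x0 ∉ L`:
the `k`-th point of `L` after `x0` gets weight `γ k` (`k ≥ 1`), and the `m`-th point
of `L` before `x0` gets weight `γ (1 - m)`. -/
noncomputable def weightFun (L : Set ℝ) (x0 : ℝ) (γ : ℤ → ℝ) (x : ℝ) : ℝ :=
  γ (if x0 < x then (Nat.card ↥(L ∩ Set.Ioc x0 x) : ℤ)
     else 1 - (Nat.card ↥(L ∩ Set.Ico x x0) : ℤ))

/-!
Write the weights as `γbar` plus a deviation. For the constant weights, `1 / (x - z)` equals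
`1 / x + z / (x * (x - z))`: the first terms have a principal value by hypothesis, and the second
ones are absolutely summable because `1 + α ≤ 2`. The deviations, summed over the points of
`[-t, t]` on one side of `x0`, are `O(n ^ α')` for `n` the number of those points, and
`n = O(t ^ (1 + α))`, so these sums `E t` are `O(t ^ β)` with `β = (1 + α) * α' < 1`. Abel summation
then turns `∑ d x / (x - z)` over the points beyond `R` into `∫ E t / (t - z) ^ 2` over `t > R`,
which converges absolutely and is holomorphic in `z` on the disc of radius `R / 2`. Hence on each
such disc `S` is a finite sum of simple fractions plus a holomorphic function.
-/

/-- The functions `f r` converge pointwise on `U`, along `l`, to a function holomorphic on `U`.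
This is what is shown of the far parts of the principal value sums; locally uniform convergence is
not part of the notion. -/
def HasHolomorphicLimitOn {κ : Type*} (l : Filter κ) (f : κ → ℂ → ℂ) (U : Set ℂ) : Prop :=
  ∃ G : ℂ → ℂ, DifferentiableOn ℂ G U ∧ ∀ z ∈ U, Tendsto (f · z) l (𝓝 (G z))

namespace HasHolomorphicLimitOn

variable {κ : Type*} {l : Filter κ} {f g : κ → ℂ → ℂ} {U : Set ℂ}

theorem add (hf : HasHolomorphicLimitOn l f U) (hg : HasHolomorphicLimitOn l g U) :
    HasHolomorphicLimitOn l (fun r z => f r z + g r z) U := by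
  obtain ⟨F, hF, hfF⟩ := hf
  obtain ⟨G, hG, hgG⟩ := hg
  exact ⟨fun z => F z + G z, hF.add hG, fun z hz => (hfF z hz).add (hgG z hz)⟩

theorem const_mul (c : ℂ) (hf : HasHolomorphicLimitOn l f U) :
    HasHolomorphicLimitOn l (fun r z => c * f r z) U := by
  obtain ⟨F, hF, hfF⟩ := hf
  exact ⟨fun z => c * F z, hF.const_mul c, fun z hz => (hfF z hz).const_mul c⟩

theorem comp_neg (hf : HasHolomorphicLimitOn l f U) :
    HasHolomorphicLimitOn l (fun r z => f r (-z)) (-U) := by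
  obtain ⟨F, hF, hfF⟩ := hf
  exact ⟨fun z => F (-z), hF.comp differentiable_neg.differentiableOn fun _ hz => hz,
    fun z hz => hfF (-z) hz⟩

theorem congr' (hf : HasHolomorphicLimitOn l f U)
    (hfg : ∀ᶠ r in l, ∀ z ∈ U, f r z = g r z) : HasHolomorphicLimitOn l g U := by
  obtain ⟨F, hF, hfF⟩ := hf
  exact ⟨F, hF, fun z hz => (hfF z hz).congr' (hfg.mono fun r hr => hr z hz)⟩

end HasHolomorphicLimitOn

section AbelSummation

open MeasureTheory

variable {ι : Type*}

theorem integral_indicator_Ici_deriv {E : Type*} [NormedAddCommGroup E] [NormedSpace ℝ E]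
    [CompleteSpace E] {f f' : ℝ → E} {R r a : ℝ} (ha : a ∈ Ioc R r)
    (hf : ∀ t ∈ Icc R r, HasDerivAt f (f' t) t) (hf' : IntervalIntegrable f' volume R r) :
    ∫ t in R..r, (Ici a).indicator f' t = f r - f a := by
  have hIcc : Ioc R r ∩ Ici a = Icc a r := by
    ext t
    simp only [mem_inter_iff, mem_Ioc, mem_Ici, mem_Icc]
    exact ⟨fun h => ⟨h.2, h.1.2⟩, fun h => ⟨⟨ha.1.trans_le h.1, h.2⟩, h.1⟩⟩
  have hsub : uIcc a r ⊆ Icc R r := by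
    rw [uIcc_of_le ha.2]
    exact Icc_subset_Icc_left ha.1.le
  rw [intervalIntegral.integral_of_le (ha.1.le.trans ha.2), setIntegral_indicator measurableSet_Ici,
    hIcc, integral_Icc_eq_integral_Ioc, ← intervalIntegral.integral_of_le ha.2]
  exact intervalIntegral.integral_eq_sub_of_hasDerivAt (fun t ht => hf t (hsub ht))
    (hf'.mono_set (hsub.trans_eq (uIcc_of_le (ha.1.le.trans ha.2)).symm))

theorem sum_smul_eq_sub_integral_smul_deriv {E : Type*} [NormedAddCommGroup E] [NormedSpace ℝ E]
    [CompleteSpace E] (s : Finset ι) {a : ι → ℝ} (d : ι → ℝ) {f f' : ℝ → E} {R r : ℝ} (hRr : R ≤ r)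
    (ha : ∀ i ∈ s, a i ∈ Ioc R r) (hf : ∀ t ∈ Icc R r, HasDerivAt f (f' t) t)
    (hf' : IntervalIntegrable f' volume R r) :
    ∑ i ∈ s, d i • f (a i)
      = (∑ i ∈ s, d i) • f r - ∫ t in R..r, (∑ i ∈ s with a i ≤ t, d i) • f' t := by
  have hintegrand : ∀ t, (∑ i ∈ s with a i ≤ t, d i) • f' t
      = ∑ i ∈ s, d i • (Ici (a i)).indicator f' t := by
    intro t
    simp only [indicator_apply, mem_Ici, smul_ite, smul_zero]
    rw [← Finset.sum_filter, Finset.sum_smul]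
  have hintegral : ∫ t in R..r, (∑ i ∈ s with a i ≤ t, d i) • f' t
      = ∑ i ∈ s, d i • (f r - f (a i)) := by
    simp only [hintegrand]
    rw [intervalIntegral.integral_finsetSum]
    · refine Finset.sum_congr rfl fun i hi => ?_
      rw [intervalIntegral.integral_smul, integral_indicator_Ici_deriv (ha i hi) hf hf']
    · intro i _
      rw [intervalIntegrable_iff_integrableOn_Ioc_of_le hRr] at hf' ⊢
      exact (hf'.indicator measurableSet_Ici).smul (d i)
  rw [hintegral, Finset.sum_smul, ← Finset.sum_sub_distrib]
  simp only [smul_sub, sub_sub_cancel]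

theorem measurable_finsetSum_of_monotone {F : ℝ → Finset ι} (hF : Monotone F) (d : ι → ℝ) :
    Measurable fun t => ∑ i ∈ F t, d i := by
  have hmono : ∀ e : ι → ℝ, (∀ i, 0 ≤ e i) → Monotone fun t => ∑ i ∈ F t, e i :=
    fun e he _ _ hst => Finset.sum_le_sum_of_subset_of_nonneg (hF hst) fun i _ _ => he i
  have hdecomp : (fun t => ∑ i ∈ F t, d i)
      = fun t => ∑ i ∈ F t, (d i)⁺ - ∑ i ∈ F t, (d i)⁻ := by
    simp only [← Finset.sum_sub_distrib, posPart_sub_negPart]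
  rw [hdecomp]
  exact (hmono _ fun i => posPart_nonneg (d i)).measurable.sub
    (hmono _ fun i => negPart_nonneg (d i)).measurable

end AbelSummation

section StieltjesKernel

open MeasureTheory

variable {R C β e t : ℝ} {E : ℝ → ℝ} {z : ℂ}

theorem half_abs_le_norm_ofReal_sub (hz : z ∈ Metric.ball (0 : ℂ) (R / 2)) (ht : R ≤ |t|) :
    |t| / 2 ≤ ‖(t : ℂ) - z‖ := by
  have htri := norm_sub_norm_le (t : ℂ) z
  rw [Complex.norm_real, Real.norm_eq_abs] at htri
  rw [mem_ball_zero_iff] at hz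
  linarith

theorem ofReal_sub_ne_zero_of_mem_ball (hR : 0 < R) (hz : z ∈ Metric.ball (0 : ℂ) (R / 2))
    (ht : R ≤ |t|) : (t : ℂ) - z ≠ 0 := by
  rw [← norm_pos_iff]
  linarith [half_abs_le_norm_ofReal_sub hz ht]

theorem norm_div_ofReal_mul_sub_le {x : ℝ} (hR : 0 < R) (hz : z ∈ Metric.ball (0 : ℂ) (R / 2))
    (hx : R ≤ |x|) :
    ‖z / (x * (x - z))‖ ≤ R * (1 / x ^ 2) := by
  have hlow := half_abs_le_norm_ofReal_sub hz hx
  have hx0 : 0 < |x| := hR.trans_le hx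
  rw [mem_ball_zero_iff] at hz
  rw [norm_div, norm_mul, Complex.norm_real, Real.norm_eq_abs, ← sq_abs x]
  calc ‖z‖ / (|x| * ‖(x : ℂ) - z‖) ≤ (R / 2) / (|x| * (|x| / 2)) := by gcongr
    _ = R * (1 / |x| ^ 2) := by field_simp

theorem norm_smul_inv_ofReal_sub_pow_le (hR : 0 < R) (hz : z ∈ Metric.ball (0 : ℂ) (R / 2))
    (ht : R ≤ t) (he : |e| ≤ C * t ^ β) (k : ℕ) :
    ‖e • (((t : ℂ) - z) ^ k)⁻¹‖ ≤ 2 ^ k * C * t ^ (β - k) := by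
  have ht0 : 0 < t := hR.trans_le ht
  have hlow := half_abs_le_norm_ofReal_sub hz (ht.trans (le_abs_self t))
  rw [abs_of_pos ht0] at hlow
  rw [norm_smul, norm_inv, norm_pow, Real.norm_eq_abs, Real.rpow_sub ht0, Real.rpow_natCast]
  calc |e| * (‖(t : ℂ) - z‖ ^ k)⁻¹ ≤ (C * t ^ β) * ((t / 2) ^ k)⁻¹ := by
        gcongr
        exact (abs_nonneg e).trans he
    _ = 2 ^ k * C * (t ^ β / t ^ k) := by
        rw [div_pow]
        field_simp

theorem integrableOn_smul_inv_ofReal_sub_pow (hR : 0 < R) (hE : Measurable E)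
    (hbound : ∀ t, R ≤ t → |E t| ≤ C * t ^ β) (hz : z ∈ Metric.ball (0 : ℂ) (R / 2)) {k : ℕ}
    (hk : β + 1 < k) : IntegrableOn (fun t : ℝ => E t • (((t : ℂ) - z) ^ k)⁻¹) (Ioi R) := by
  have hdom : IntegrableOn (fun t : ℝ => 2 ^ k * C * t ^ (β - k)) (Ioi R) :=
    (integrableOn_Ioi_rpow_of_lt (by linarith) hR).const_mul _
  refine hdom.mono' (by fun_prop) ?_
  filter_upwards [ae_restrict_mem measurableSet_Ioi] with t ht
  exact norm_smul_inv_ofReal_sub_pow_le hR hz (le_of_lt ht) (hbound t (le_of_lt ht)) k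

theorem differentiableOn_integral_smul_inv_ofReal_sub_sq (hR : 0 < R) (hE : Measurable E)
    (hbound : ∀ t, R ≤ t → |E t| ≤ C * t ^ β) (hβ : β < 1) :
    DifferentiableOn ℂ (fun z => ∫ t in Ioi R, E t • (((t : ℂ) - z) ^ 2)⁻¹)
      (Metric.ball 0 (R / 2)) := by
  intro z hz
  have hderiv : ∀ t ∈ Ioi R, ∀ z ∈ Metric.ball (0 : ℂ) (R / 2),
      HasDerivAt (fun z : ℂ => E t • (((t : ℂ) - z) ^ 2)⁻¹)
        ((2 : ℂ) * (E t • (((t : ℂ) - z) ^ 3)⁻¹)) z := by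
    intro t ht z hz
    have hne := ofReal_sub_ne_zero_of_mem_ball hR hz ((le_of_lt ht).trans (le_abs_self t))
    convert! (((((hasDerivAt_id z).const_sub (t : ℂ)).pow 2).inv (pow_ne_zero 2 hne)).const_smul
      (E t)) using 1
    simp only [Complex.real_smul, Nat.cast_ofNat, id_eq, Nat.add_one_sub_one, pow_one, mul_neg,
      mul_one, neg_neg, Pi.pow_apply]
    field_simp
  have hdom : IntegrableOn (fun t : ℝ => 2 * (2 ^ 3 * C * t ^ (β - (3 : ℕ)))) (Ioi R) :=
    ((integrableOn_Ioi_rpow_of_lt (by norm_num; linarith) hR).const_mul _).const_mul _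
  refine (hasDerivAt_integral_of_dominated_loc_of_deriv_le
    (F := fun z t => E t • (((t : ℂ) - z) ^ 2)⁻¹)
    (F' := fun z t => (2 : ℂ) * (E t • (((t : ℂ) - z) ^ 3)⁻¹))
    (Metric.isOpen_ball.mem_nhds hz) (.of_forall fun w => by fun_prop)
    (integrableOn_smul_inv_ofReal_sub_pow hR hE hbound hz (by norm_num; linarith))
    (by fun_prop) ?_ hdom ?_).2.differentiableAt.differentiableWithinAt
  · filter_upwards [ae_restrict_mem measurableSet_Ioi] with t ht w hw
    rw [norm_mul, Complex.norm_ofNat]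
    gcongr
    exact norm_smul_inv_ofReal_sub_pow_le hR hw (le_of_lt ht) (hbound t (le_of_lt ht)) 3
  · filter_upwards [ae_restrict_mem measurableSet_Ioi] with t ht
    exact hderiv t ht

theorem sum_smul_inv_sub_eq_add_integral {ι : Type*} (s : Finset ι) {a : ι → ℝ} (d : ι → ℝ)
    {r : ℝ} (hRr : R ≤ r) (ha : ∀ i ∈ s, a i ∈ Ioc R r) (hz : ∀ t ∈ Icc R r, (t : ℂ) - z ≠ 0) :
    ∑ i ∈ s, d i • ((a i : ℂ) - z)⁻¹ = (∑ i ∈ s, d i) • ((r : ℂ) - z)⁻¹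
      + ∫ t in R..r, (∑ i ∈ s with a i ≤ t, d i) • (((t : ℂ) - z) ^ 2)⁻¹ := by
  have hderiv : ∀ t ∈ Icc R r,
      HasDerivAt (fun t : ℝ => ((t : ℂ) - z)⁻¹) (-(((t : ℂ) - z) ^ 2)⁻¹) t := by
    intro t ht
    convert! ((Complex.ofRealCLM.hasDerivAt (x := t)).sub_const z).inv (hz t ht) using 1
    simp [neg_div]
  have hcont : ContinuousOn (fun t : ℝ => -(((t : ℂ) - z) ^ 2)⁻¹) (uIcc R r) := by
    rw [uIcc_of_le hRr]
    exact ((by fun_prop : ContinuousOn (fun t : ℝ => ((t : ℂ) - z) ^ 2) (Icc R r)).inv₀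
      fun t ht => pow_ne_zero 2 (hz t ht)).neg
  rw [sum_smul_eq_sub_integral_smul_deriv s d hRr ha hderiv hcont.intervalIntegrable,
    sub_eq_add_neg, ← intervalIntegral.integral_neg]
  simp only [smul_neg, neg_neg]

theorem hasHolomorphicLimitOn_sum_smul_inv_sub {ι : Type*} {s : Set ι} {a d : ι → ℝ}
    {F : ℝ → Finset ι} (hR : 0 < R) (hF : ∀ r i, i ∈ F r ↔ i ∈ s ∧ a i ∈ Ioc R r)
    (hbound : ∀ t, R ≤ t → |∑ i ∈ F t, d i| ≤ C * t ^ β) (hβ : β < 1) :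
    HasHolomorphicLimitOn atTop (fun r z => ∑ i ∈ F r, d i • ((a i : ℂ) - z)⁻¹)
      (Metric.ball 0 (R / 2)) := by
  have hmono : Monotone F := fun r r' hr i hi =>
    (hF r' i).2 ⟨((hF r i).1 hi).1, Ioc_subset_Ioc_right hr ((hF r i).1 hi).2⟩
  have hmeas := measurable_finsetSum_of_monotone hmono d
  refine ⟨fun z => 0 + ∫ t in Ioi R, (∑ i ∈ F t, d i) • (((t : ℂ) - z) ^ 2)⁻¹,
    (differentiableOn_integral_smul_inv_ofReal_sub_sq hR hmeas hbound hβ).const_add 0,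
    fun z hz => ?_⟩
  have habel : ∀ r, R ≤ r → ∑ i ∈ F r, d i • ((a i : ℂ) - z)⁻¹
      = (∑ i ∈ F r, d i) • ((r : ℂ) - z)⁻¹
        + ∫ t in R..r, (∑ i ∈ F t, d i) • (((t : ℂ) - z) ^ 2)⁻¹ := by
    intro r hr
    rw [sum_smul_inv_sub_eq_add_integral (F r) d hr (fun i hi => ((hF r i).1 hi).2)
      fun t ht => ofReal_sub_ne_zero_of_mem_ball hR hz (ht.1.trans (le_abs_self t))]
    congr 1
    refine intervalIntegral.integral_congr fun t ht => ?_
    rw [uIcc_of_le hr] at ht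
    have hfilter : {i ∈ F r | a i ≤ t} = F t := by
      ext i
      simp only [Finset.mem_filter, hF, mem_Ioc]
      exact ⟨fun h => ⟨h.1.1, h.1.2.1, h.2⟩, fun h => ⟨⟨h.1, h.2.1, h.2.2.trans ht.2⟩, h.2.2⟩⟩
    simp only [hfilter]
  have hboundary : Tendsto (fun r : ℝ => (∑ i ∈ F r, d i) • ((r : ℂ) - z)⁻¹) atTop (𝓝 0) := by
    have hdecay : Tendsto (fun r : ℝ => 2 ^ 1 * C * r ^ (β - (1 : ℕ))) atTop (𝓝 0) := by
      simpa using (tendsto_rpow_neg_atTop (sub_pos.2 hβ)).const_mul (2 * C)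
    refine squeeze_zero_norm' ?_ hdecay
    filter_upwards [eventually_ge_atTop R] with r hr
    simpa using norm_smul_inv_ofReal_sub_pow_le hR hz hr (hbound r hr) 1
  refine (hboundary.add (intervalIntegral_tendsto_integral_Ioi R
    (integrableOn_smul_inv_ofReal_sub_pow hR hmeas hbound hz (by norm_num; linarith))
    tendsto_id)).congr' ?_
  filter_upwards [eventually_ge_atTop R] with r hr
  exact (habel r hr).symm

end StieltjesKernel

section Window

variable {L : Set ℝ} (hL : ∀ a b : ℝ, (L ∩ Icc a b).Finite)

/-- The points of the locally finite set `L` in `[-r, r]`, as a finite set: the windows along which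
the principal values are taken. -/
noncomputable def window (r : ℝ) : Finset ℝ := (hL (-r) r).toFinset

variable {hL}

theorem mem_window {r x : ℝ} : x ∈ window hL r ↔ x ∈ L ∧ |x| ≤ r := by
  rw [window, Finite.mem_toFinset, mem_inter_iff, mem_Icc, abs_le]

theorem coe_window (r : ℝ) : (window hL r : Set ℝ) = L ∩ Icc (-r) r :=
  (hL (-r) r).coe_toFinset

theorem filter_window_not_lt_abs {R r : ℝ} (hRr : R ≤ r) :
    {x ∈ window hL r | ¬ R < |x|} = window hL R := by
  ext x
  simp only [Finset.mem_filter, mem_window, not_lt]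
  exact ⟨fun h => ⟨h.1.1, h.2⟩, fun h => ⟨⟨h.1, h.2.trans hRr⟩, h.2⟩⟩

theorem exists_gt_forall_mem_window_abs_le (r : ℝ) :
    ∃ r' > r, ∀ x ∈ L, |x| < r' → x ∈ window hL r := by
  have hgap : ∀ᶠ r' in 𝓝[>] r, ∀ x ∈ window hL (r + 1), r < |x| → r' ≤ |x| := by
    rw [Filter.eventually_all_finset]
    intro x _
    by_cases hx : r < |x|
    · filter_upwards [Ioc_mem_nhdsGT hx] with r' hr' _ using hr'.2
    · exact .of_forall fun _ h => absurd h hx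
  obtain ⟨r', hr', hr'mem⟩ := (hgap.and (Ioc_mem_nhdsGT (lt_add_one r))).exists
  refine ⟨r', hr'mem.1, fun x hx hxr' => mem_window.2 ⟨hx, ?_⟩⟩
  by_contra! hlt
  exact absurd (hr' x (mem_window.2 ⟨hx, hxr'.le.trans hr'mem.2⟩) hlt) (not_le.2 hxr')

theorem tendsto_sum_window_of_tendsto_tsum {f : ℝ → ℝ} {R h : ℝ}
    (hf : Tendsto (fun r : ℝ => ∑' x : ↥{t | t ∈ L ∧ R < |t| ∧ |t| < r}, f x) atTop (𝓝 h)) :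
    Tendsto (fun r => ∑ x ∈ window hL r with R < |x|, f x) atTop (𝓝 h) := by
  choose ρ hρ hmem using exists_gt_forall_mem_window_abs_le (hL := hL)
  refine (hf.comp (tendsto_atTop_mono (fun r => (hρ r).le) tendsto_id)).congr fun r => ?_
  have hset : {t | t ∈ L ∧ R < |t| ∧ |t| < ρ r} = ↑{x ∈ window hL r | R < |x|} := by
    ext x
    simp only [mem_ofPred_eq, Finset.coe_filter, mem_window]
    exact ⟨fun hx => ⟨mem_window.1 (hmem r x hx.1 hx.2.2), hx.2.1⟩,
      fun hx => ⟨hx.1.1, hx.2, hx.1.2.trans_lt (hρ r)⟩⟩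
  rw [Function.comp_apply, hset, Finset.tsum_subtype']

theorem tendsto_sum_of_summable_subtype {α κ E : Type*} [AddCommMonoid E] [TopologicalSpace E]
    {l : Filter κ} {T : Set α} {F : κ → Finset α} {f : α → E} (hFT : ∀ r, ∀ x ∈ F r, x ∈ T)
    (hF : ∀ x ∈ T, ∀ᶠ r in l, x ∈ F r) (hf : Summable fun x : T => f x) :
    Tendsto (fun r => ∑ x ∈ F r, f x) l (𝓝 (∑' x : T, f x)) := by
  have hexhaust : Tendsto (fun r => (F r).subtype (· ∈ T)) l atTop := by
    refine tendsto_atTop.2 fun s => ?_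
    filter_upwards [(Filter.eventually_all_finset s).2 fun x _ => hF x x.2] with r hr x hx
    exact Finset.mem_subtype.2 (hr x hx)
  refine (hf.hasSum.comp hexhaust).congr fun r => ?_
  exact Finset.sum_subtype_of_mem f (hFT r)

theorem exists_card_window_add_one_le {p : ℝ} (hp : 0 ≤ p)
    (hsum : Summable fun x : ↥{t | t ∈ L ∧ 1 < |t|} => 1 / |(x : ℝ)| ^ p) :
    ∃ M, 0 ≤ M ∧ ∀ t, 1 ≤ t → ((window hL t).card : ℝ) + 1 ≤ M * t ^ p := by
  set T := ∑' x : ↥{t | t ∈ L ∧ 1 < |t|}, 1 / |(x : ℝ)| ^ p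
  have hT : 0 ≤ T := tsum_nonneg fun x => by positivity
  refine ⟨T + ((window hL 1).card + 1), by positivity, fun t ht => ?_⟩
  have hfar : (({x ∈ window hL t | 1 < |x|}.card : ℕ) : ℝ) ≤ T * t ^ p := by
    calc (({x ∈ window hL t | 1 < |x|}.card : ℕ) : ℝ)
        = ∑ x ∈ window hL t with 1 < |x|, (1 : ℝ) := by simp
      _ ≤ ∑ x ∈ window hL t with 1 < |x|, 1 / |x| ^ p * t ^ p := by
        refine Finset.sum_le_sum fun x hx => ?_
        obtain ⟨hxt, hx1⟩ := Finset.mem_filter.1 hx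
        have hx0 : 0 < |x| := one_pos.trans hx1
        rw [one_div, inv_mul_eq_div, one_le_div (by positivity)]
        exact Real.rpow_le_rpow hx0.le (mem_window.1 hxt).2 hp
      _ = (∑ x ∈ window hL t with 1 < |x|, 1 / |x| ^ p) * t ^ p := by rw [Finset.sum_mul]
      _ ≤ T * t ^ p := by
        gcongr
        rw [← Finset.sum_subtype_of_mem (p := (· ∈ {t | t ∈ L ∧ 1 < |t|})) (fun x => 1 / |x| ^ p)
          fun x hx => ⟨(mem_window.1 (Finset.mem_filter.1 hx).1).1, (Finset.mem_filter.1 hx).2⟩]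
        exact hsum.sum_le_tsum _ fun x _ => by positivity
  have hpow : ((window hL 1).card : ℝ) + 1 ≤ ((window hL 1).card + 1) * t ^ p :=
    le_mul_of_one_le_right (by positivity) (Real.one_le_rpow ht hp)
  rw [← Finset.card_filter_add_card_filter_not (s := window hL t) (1 < |·|),
    filter_window_not_lt_abs ht, Nat.cast_add, add_mul]
  linarith

theorem summable_one_div_sq_of_summable_one_div_abs_rpow {p R : ℝ} (hp : p ≤ 2) (hR : 1 ≤ R)
    (hsum : Summable fun x : ↥{t | t ∈ L ∧ 1 < |t|} => 1 / |(x : ℝ)| ^ p) :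
    Summable fun x : ↥{t | t ∈ L ∧ R < |t|} => 1 / (x : ℝ) ^ 2 := by
  have hsub : {t | t ∈ L ∧ R < |t|} ⊆ {t | t ∈ L ∧ 1 < |t|} := fun t ht =>
    ⟨ht.1, hR.trans_lt ht.2⟩
  refine (hsum.comp_injective (inclusion_injective hsub)).of_nonneg_of_le
    (fun x => by positivity) fun x => ?_
  have hx : 1 < |(x : ℝ)| := hR.trans_lt x.2.2
  rw [← sq_abs, ← Real.rpow_natCast]
  simp only [Function.comp_apply]
  gcongr
  · exact hx.le
  · exact_mod_cast hp

theorem hasHolomorphicLimitOn_sum_window_inv_sub {R h : ℝ} (hR : 0 < R)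
    (hh : Tendsto (fun r => ∑ x ∈ window hL r with R < |x|, 1 / x) atTop (𝓝 h))
    (hsq : Summable fun x : ↥{t | t ∈ L ∧ R < |t|} => 1 / (x : ℝ) ^ 2) :
    HasHolomorphicLimitOn atTop (fun r z => ∑ x ∈ window hL r with R < |x|, ((x : ℂ) - z)⁻¹)
      (Metric.ball 0 (R / 2)) := by
  have hne : ∀ x : ℝ, R < |x| → (x : ℂ) ≠ 0 := fun x hx =>
    Complex.ofReal_ne_zero.2 (abs_pos.1 (hR.trans hx))
  have hsum := hsq.mul_left R
  refine ⟨fun z => h + ∑' x : ↥{t | t ∈ L ∧ R < |t|}, z / (x * (x - z)),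
    (Complex.differentiableOn_tsum_of_summable_norm hsum (fun x => ?_) Metric.isOpen_ball
      fun x z hz => norm_div_ofReal_mul_sub_le hR hz x.2.2.le).const_add _, fun z hz => ?_⟩
  · exact differentiableOn_id.div (by fun_prop) fun z hz =>
      mul_ne_zero (hne x x.2.2) (ofReal_sub_ne_zero_of_mem_ball hR hz x.2.2.le)
  · have hcorr := tendsto_sum_of_summable_subtype (l := atTop) (T := {t | t ∈ L ∧ R < |t|})
      (F := fun r => {x ∈ window hL r | R < |x|}) (f := fun x : ℝ => z / (x * (x - z)))
      (fun r x hx => ⟨(mem_window.1 (Finset.mem_filter.1 hx).1).1, (Finset.mem_filter.1 hx).2⟩)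
      (fun x hx => (eventually_ge_atTop |x|).mono fun r hr =>
        Finset.mem_filter.2 ⟨mem_window.2 ⟨hx.1, hr⟩, hx.2⟩)
      (.of_norm_bounded hsum fun x => norm_div_ofReal_mul_sub_le hR hz x.2.2.le)
    refine (((Complex.continuous_ofReal.tendsto h).comp hh).add hcorr).congr fun r => ?_
    simp only [Function.comp_apply, Complex.ofReal_sum]
    rw [← Finset.sum_add_distrib]
    refine Finset.sum_congr rfl fun x hx => ?_
    have hx' := (Finset.mem_filter.1 hx).2
    have hx0 := hne x hx'
    have hxz := ofReal_sub_ne_zero_of_mem_ball hR hz hx'.le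
    push_cast
    field_simp
    ring

end Window

section Ranks

variable {α M : Type*} [LinearOrder α] [AddCommMonoid M]

theorem sum_card_filter_le_eq_sum_range (F : Finset α) (g : ℕ → M) :
    ∑ x ∈ F, g (F.filter (· ≤ x)).card = ∑ k ∈ Finset.range F.card, g (k + 1) := by
  induction F using Finset.induction_on_max with
  | empty => rfl
  | insert a s ha ih =>
    have has : a ∉ s := fun h => lt_irrefl a (ha a h)
    have hold : ∀ x ∈ s, (insert a s).filter (· ≤ x) = s.filter (· ≤ x) := fun x hx => by
      rw [Finset.filter_insert, if_neg (not_le.2 (ha x hx))]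
    have hnew : (insert a s).filter (· ≤ a) = insert a s :=
      Finset.filter_true_of_mem fun x hx =>
        (Finset.mem_insert.1 hx).elim le_of_eq fun h => (ha x h).le
    rw [Finset.sum_insert has, hnew, Finset.card_insert_of_notMem has, Finset.sum_range_succ, ← ih,
      add_comm, Finset.sum_congr rfl fun x hx => by rw [hold x hx]]

theorem sum_card_filter_ge_eq_sum_range (F : Finset α) (g : ℕ → M) :
    ∑ x ∈ F, g (F.filter (x ≤ ·)).card = ∑ k ∈ Finset.range F.card, g (k + 1) :=
  sum_card_filter_le_eq_sum_range (α := αᵒᵈ) F g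

end Ranks

section Weights

variable {L : Set ℝ} {hL : ∀ a b : ℝ, (L ∩ Icc a b).Finite} {x0 t : ℝ} {γ : ℤ → ℝ}

theorem sum_weightFun_right (ht : |x0| ≤ t) :
    ∑ x ∈ window hL t with x0 < x, weightFun L x0 γ x
      = ∑ k ∈ Finset.range {x ∈ window hL t | x0 < x}.card, γ (k + 1) := by
  have hrank := sum_card_filter_le_eq_sum_range {x ∈ window hL t | x0 < x} fun n => γ n
  simp only [Nat.cast_add, Nat.cast_one] at hrank
  rw [← hrank]
  refine Finset.sum_congr rfl fun x hx => ?_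
  obtain ⟨hxt, hx0⟩ := Finset.mem_filter.1 hx
  have hset : L ∩ Ioc x0 x = ↑({y ∈ window hL t | x0 < y}.filter (· ≤ x)) := by
    ext y
    simp only [mem_inter_iff, mem_Ioc, Finset.coe_filter, Finset.mem_filter, mem_window,
      mem_ofPred_eq]
    have := abs_le.1 ht
    have := abs_le.1 (mem_window.1 hxt).2
    exact ⟨fun h => ⟨⟨⟨h.1, abs_le.2 ⟨by linarith, by linarith⟩⟩, h.2.1⟩, h.2.2⟩,
      fun h => ⟨h.1.1.1, h.1.2, h.2⟩⟩
  rw [weightFun, if_pos hx0, Nat.card_coe_set_eq, hset, ncard_coe_finset]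

theorem sum_weightFun_left (ht : |x0| ≤ t) :
    ∑ x ∈ window hL t with x < x0, weightFun L x0 γ x
      = ∑ k ∈ Finset.range {x ∈ window hL t | x < x0}.card, γ (-k) := by
  have hrank := sum_card_filter_ge_eq_sum_range {x ∈ window hL t | x < x0} fun n => γ (1 - n)
  simp only [Nat.cast_add, Nat.cast_one, sub_add_cancel_right] at hrank
  rw [← hrank]
  refine Finset.sum_congr rfl fun x hx => ?_
  obtain ⟨hxt, hx0⟩ := Finset.mem_filter.1 hx
  have hset : L ∩ Ico x x0 = ↑({y ∈ window hL t | y < x0}.filter (x ≤ ·)) := by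
    ext y
    simp only [mem_inter_iff, mem_Ico, Finset.coe_filter, Finset.mem_filter, mem_window,
      mem_ofPred_eq]
    have := abs_le.1 ht
    have := abs_le.1 (mem_window.1 hxt).2
    exact ⟨fun h => ⟨⟨⟨h.1, abs_le.2 ⟨by linarith, by linarith⟩⟩, h.2.2⟩, h.2.1⟩,
      fun h => ⟨h.1.1.1, h.2, h.1.2⟩⟩
  rw [weightFun, if_neg hx0.le.not_gt, Nat.card_coe_set_eq, hset, ncard_coe_finset]

variable {γbar c α' : ℝ}

theorem abs_sum_range_succ_sub_le (hα' : 0 ≤ α')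
    (hγ : ∀ m : ℕ, 1 ≤ m →
      |(∑ k ∈ Finset.range m, γ (k : ℤ)) - γbar * (m : ℝ)| ≤ c * (m : ℝ) ^ α') (n : ℕ) :
    |(∑ k ∈ Finset.range n, γ (k + 1)) - γbar * n| ≤ (c + |γ 0 - γbar|) * ((n : ℝ) + 1) ^ α' := by
  have hsum := hγ (n + 1) n.succ_pos
  rw [Finset.sum_range_succ'] at hsum
  push_cast at hsum
  have hzero : |γ 0 - γbar| ≤ |γ 0 - γbar| * ((n : ℝ) + 1) ^ α' :=
    le_mul_of_one_le_right (abs_nonneg _)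
      (Real.one_le_rpow (le_add_of_nonneg_left n.cast_nonneg) hα')
  calc |(∑ k ∈ Finset.range n, γ (k + 1)) - γbar * n|
      = |(∑ k ∈ Finset.range n, γ (k + 1) + γ 0 - γbar * (n + 1)) - (γ 0 - γbar)| := by ring_nf
    _ ≤ c * ((n : ℝ) + 1) ^ α' + |γ 0 - γbar| * ((n : ℝ) + 1) ^ α' :=
      (abs_sub _ _).trans (add_le_add hsum hzero)
    _ = (c + |γ 0 - γbar|) * ((n : ℝ) + 1) ^ α' := (add_mul _ _ _).symm

theorem abs_sum_range_neg_sub_le (hα' : 0 ≤ α') (hc : 0 ≤ c)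
    (hγ : ∀ m : ℕ, 1 ≤ m →
      |(∑ k ∈ Finset.range m, γ (-(k : ℤ) - 1)) - γbar * (m : ℝ)| ≤ c * (m : ℝ) ^ α') (n : ℕ) :
    |(∑ k ∈ Finset.range n, γ (-k)) - γbar * n| ≤ (c + |γ 0 - γbar|) * ((n : ℝ) + 1) ^ α' := by
  rcases n with _ | m
  · simp only [Finset.range_zero, Finset.sum_empty, Nat.cast_zero, mul_zero, sub_self, abs_zero]
    positivity
  have hsum : |(∑ k ∈ Finset.range m, γ (-(k : ℤ) - 1)) - γbar * m| ≤ c * (m : ℝ) ^ α' := by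
    rcases Nat.eq_zero_or_pos m with rfl | hm
    · simp only [Finset.range_zero, Finset.sum_empty, Nat.cast_zero, mul_zero, sub_self, abs_zero]
      positivity
    · exact hγ m hm
  have hmono : c * (m : ℝ) ^ α' ≤ c * (((m + 1 : ℕ) : ℝ) + 1) ^ α' := by
    gcongr
    push_cast
    linarith
  have hzero : |γ 0 - γbar| ≤ |γ 0 - γbar| * (((m + 1 : ℕ) : ℝ) + 1) ^ α' :=
    le_mul_of_one_le_right (abs_nonneg _)
      (Real.one_le_rpow (le_add_of_nonneg_left (Nat.cast_nonneg _)) hα')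
  have hsplit : (∑ k ∈ Finset.range (m + 1), γ (-k)) - γbar * (m + 1 : ℕ)
      = ((∑ k ∈ Finset.range m, γ (-(k : ℤ) - 1)) - γbar * m) + (γ 0 - γbar) := by
    rw [Finset.sum_range_succ']
    push_cast
    simp only [neg_add', neg_zero]
    ring
  rw [hsplit, add_mul]
  exact (abs_add_le _ _).trans (add_le_add (hsum.trans hmono) hzero)

theorem abs_sum_weightFun_sub_right_le (hα' : 0 ≤ α')
    (hγ : ∀ m : ℕ, 1 ≤ m →
      |(∑ k ∈ Finset.range m, γ (k : ℤ)) - γbar * (m : ℝ)| ≤ c * (m : ℝ) ^ α') (hc : 0 ≤ c)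
    (ht : |x0| ≤ t) :
    |∑ x ∈ window hL t with x0 < x, (weightFun L x0 γ x - γbar)|
      ≤ (c + |γ 0 - γbar|) * (((window hL t).card : ℝ) + 1) ^ α' := by
  rw [Finset.sum_sub_distrib, sum_weightFun_right ht, Finset.sum_const, nsmul_eq_mul,
    mul_comm _ γbar]
  refine (abs_sum_range_succ_sub_le hα' hγ _).trans ?_
  gcongr
  exact Finset.filter_subset _ _

theorem abs_sum_weightFun_sub_left_le (hα' : 0 ≤ α') (hc : 0 ≤ c)
    (hγ : ∀ m : ℕ, 1 ≤ m →
      |(∑ k ∈ Finset.range m, γ (-(k : ℤ) - 1)) - γbar * (m : ℝ)| ≤ c * (m : ℝ) ^ α')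
    (ht : |x0| ≤ t) :
    |∑ x ∈ window hL t with x < x0, (weightFun L x0 γ x - γbar)|
      ≤ (c + |γ 0 - γbar|) * (((window hL t).card : ℝ) + 1) ^ α' := by
  rw [Finset.sum_sub_distrib, sum_weightFun_left ht, Finset.sum_const, nsmul_eq_mul,
    mul_comm _ γbar]
  refine (abs_sum_range_neg_sub_le hα' hc hγ _).trans ?_
  gcongr
  exact Finset.filter_subset _ _

theorem abs_sum_window_tail_le {d : ℝ → ℝ} {P : ℝ → Prop} {C β R : ℝ} (hR : 0 < R) (hβ : 0 ≤ β)
    (hd : ∀ t, R ≤ t → |∑ x ∈ window hL t with P x, d x| ≤ C * t ^ β) (ht : R ≤ t) :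
    |∑ x ∈ window hL t with P x ∧ R < |x|, d x| ≤ 2 * C * t ^ β := by
  have hC : 0 ≤ C :=
    nonneg_of_mul_nonneg_left ((abs_nonneg _).trans (hd R le_rfl)) (Real.rpow_pos_of_pos hR β)
  have hsplit := Finset.sum_filter_add_sum_filter_not {x ∈ window hL t | P x} (R < |·|) d
  rw [Finset.filter_filter, Finset.filter_comm, filter_window_not_lt_abs ht] at hsplit
  have hmono : C * R ^ β ≤ C * t ^ β := by gcongr
  rw [eq_sub_of_add_eq hsplit]
  refine (abs_sub _ _).trans ?_
  linarith [hd t ht, hd R le_rfl]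

theorem hasHolomorphicLimitOn_sum_window_right {d : ℝ → ℝ} {C β R : ℝ} (hR : 0 < R) (hβ : 0 ≤ β)
    (hβ1 : β < 1) (hx0 : |x0| ≤ R)
    (hd : ∀ t, R ≤ t → |∑ x ∈ window hL t with x0 < x, d x| ≤ C * t ^ β) :
    HasHolomorphicLimitOn atTop (fun r z => ∑ x ∈ window hL r with R < x, d x • ((x : ℂ) - z)⁻¹)
      (Metric.ball 0 (R / 2)) := by
  refine hasHolomorphicLimitOn_sum_smul_inv_sub (s := L) (a := id) (C := 2 * C) hR
    (fun r x => ?_) (fun t ht => ?_) hβ1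
  · simp only [Finset.mem_filter, mem_window, id_eq, mem_Ioc]
    exact ⟨fun h => ⟨h.1.1, h.2, (le_abs_self x).trans h.1.2⟩,
      fun h => ⟨⟨h.1, (abs_of_pos (hR.trans h.2.1)).trans_le h.2.2⟩, h.2.1⟩⟩
  · convert! abs_sum_window_tail_le hR hβ hd ht using 4 with x
    have := abs_le.1 hx0
    rw [lt_abs]
    exact ⟨fun h => ⟨by linarith, Or.inl h⟩, fun h => h.2.resolve_right (by linarith)⟩

theorem hasHolomorphicLimitOn_sum_window_left {d : ℝ → ℝ} {C β R : ℝ} (hR : 0 < R) (hβ : 0 ≤ β)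
    (hβ1 : β < 1) (hx0 : |x0| ≤ R)
    (hd : ∀ t, R ≤ t → |∑ x ∈ window hL t with x < x0, d x| ≤ C * t ^ β) :
    HasHolomorphicLimitOn atTop (fun r z => ∑ x ∈ window hL r with R < -x, d x • ((x : ℂ) - z)⁻¹)
      (Metric.ball 0 (R / 2)) := by
  have hreflected : HasHolomorphicLimitOn atTop
      (fun r z => ∑ x ∈ window hL r with R < -x, d x • (((-x : ℝ) : ℂ) - z)⁻¹)
      (Metric.ball 0 (R / 2)) := by
    refine hasHolomorphicLimitOn_sum_smul_inv_sub (s := L) (C := 2 * C) hR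
      (fun r x => ?_) (fun t ht => ?_) hβ1
    · simp only [Finset.mem_filter, mem_window, mem_Ioc]
      exact ⟨fun h => ⟨h.1.1, h.2, (neg_le_abs x).trans h.1.2⟩,
        fun h => ⟨⟨h.1, (abs_of_neg (neg_pos.1 (hR.trans h.2.1))).trans_le h.2.2⟩, h.2.1⟩⟩
    · convert! abs_sum_window_tail_le hR hβ hd ht using 4 with x
      have := abs_le.1 hx0
      rw [lt_abs]
      exact ⟨fun h => ⟨by linarith, Or.inr h⟩, fun h => h.2.resolve_left (by linarith)⟩
  have hneg := hreflected.comp_neg.const_mul (-1)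
  rw [neg_ball, neg_zero] at hneg
  refine hneg.congr' (.of_forall fun r z _ => ?_)
  rw [Finset.mul_sum]
  refine Finset.sum_congr rfl fun x _ => ?_
  rw [Complex.ofReal_neg, ← neg_sub', inv_neg, smul_neg, neg_one_mul, neg_neg]

end Weights

section WeightedWindow

variable {L : Set ℝ} {hL : ∀ a b : ℝ, (L ∩ Icc a b).Finite} {x0 : ℝ} {γ : ℤ → ℝ} {γbar c α' : ℝ}

theorem mul_rpow_le_mul_rpow_mul {A M n p q t : ℝ} (hA : 0 ≤ A) (hM : 0 ≤ M) (hn : 0 ≤ n)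
    (hq : 0 ≤ q) (ht : 0 ≤ t) (h : n ≤ M * t ^ p) : A * n ^ q ≤ A * M ^ q * t ^ (p * q) := by
  rw [mul_assoc, Real.rpow_mul ht, ← Real.mul_rpow hM (Real.rpow_nonneg ht p)]
  gcongr

theorem sum_window_tail_eq_sum_right_add_sum_left {E : Type*} [AddCommMonoid E] {R : ℝ}
    (hR : 0 ≤ R) (r : ℝ) (f : ℝ → E) :
    ∑ x ∈ window hL r with R < |x|, f x
      = ∑ x ∈ window hL r with R < x, f x + ∑ x ∈ window hL r with R < -x, f x := by
  simp only [lt_abs]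
  rw [Finset.filter_or, Finset.sum_union]
  exact Finset.disjoint_filter.2 fun x _ h₁ h₂ => by linarith

theorem hasHolomorphicLimitOn_sum_window_weightFun {p R h : ℝ} (hp : 0 ≤ p) (hp2 : p ≤ 2)
    (hsum : Summable fun x : ↥{t | t ∈ L ∧ 1 < |t|} => 1 / |(x : ℝ)| ^ p)
    (hα' : 0 ≤ α') (hpα' : p * α' < 1)
    (hγsum1 : ∀ m : ℕ, 1 ≤ m →
      |(∑ k ∈ Finset.range m, γ (k : ℤ)) - γbar * (m : ℝ)| ≤ c * (m : ℝ) ^ α')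
    (hγsum2 : ∀ m : ℕ, 1 ≤ m →
      |(∑ k ∈ Finset.range m, γ (-(k : ℤ) - 1)) - γbar * (m : ℝ)| ≤ c * (m : ℝ) ^ α')
    (hR : 1 ≤ R) (hx0 : |x0| ≤ R)
    (hh : Tendsto (fun r => ∑ x ∈ window hL r with R < |x|, 1 / x) atTop (𝓝 h)) :
    HasHolomorphicLimitOn atTop
      (fun r z => ∑ x ∈ window hL r with R < |x|, (weightFun L x0 γ x : ℂ) / ((x : ℂ) - z))
      (Metric.ball 0 (R / 2)) := by
  have hR0 : 0 < R := one_pos.trans_le hR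
  have hc : 0 ≤ c := (abs_nonneg _).trans (by simpa using hγsum1 1 le_rfl)
  obtain ⟨M, hM, hcard⟩ := exists_card_window_add_one_le (hL := hL) hp hsum
  have hpow : ∀ t, R ≤ t → (c + |γ 0 - γbar|) * (((window hL t).card : ℝ) + 1) ^ α'
      ≤ (c + |γ 0 - γbar|) * M ^ α' * t ^ (p * α') := fun t ht =>
    mul_rpow_le_mul_rpow_mul (by positivity) hM (by positivity) hα' (by linarith)
      (hcard t (hR.trans ht))
  have hright := hasHolomorphicLimitOn_sum_window_right hR0 (mul_nonneg hp hα') hpα' hx0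
    fun t ht => (abs_sum_weightFun_sub_right_le hα' hγsum1 hc (hx0.trans ht)).trans (hpow t ht)
  have hleft := hasHolomorphicLimitOn_sum_window_left hR0 (mul_nonneg hp hα') hpα' hx0
    fun t ht => (abs_sum_weightFun_sub_left_le hα' hc hγsum2 (hx0.trans ht)).trans (hpow t ht)
  have hunweighted := hasHolomorphicLimitOn_sum_window_inv_sub hR0 hh
    (summable_one_div_sq_of_summable_one_div_abs_rpow hp2 hR hsum)
  refine ((hright.add hleft).add (hunweighted.const_mul γbar)).congr'
    (.of_forall fun r z _ => ?_)
  rw [← sum_window_tail_eq_sum_right_add_sum_left hR0.le, Finset.mul_sum,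
    ← Finset.sum_add_distrib]
  refine Finset.sum_congr rfl fun x _ => ?_
  rw [Complex.real_smul, Complex.ofReal_sub, ← add_mul, sub_add_cancel, div_eq_mul_inv]

end WeightedWindow

section PartialFractions

variable {L : Set ℝ} {hL : ∀ a b : ℝ, (L ∩ Icc a b).Finite} {w : ℝ → ℂ} {S : ℂ → ℂ}

theorem differentiableOn_sum_div_ofReal_sub (F : Finset ℝ) (w : ℝ → ℂ) :
    DifferentiableOn ℂ (fun z => ∑ x ∈ F, w x / ((x : ℂ) - z)) {z | ∀ x ∈ F, z ≠ x} :=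
  .fun_sum fun x hx => (differentiableOn_const _).div (by fun_prop)
    fun _ hz => sub_ne_zero.2 (hz x hx).symm

theorem isOpen_setOf_forall_ne_ofReal (F : Finset ℝ) : IsOpen {z : ℂ | ∀ x ∈ F, z ≠ x} := by
  simp only [ofPred_forall]
  exact isOpen_biInter_finset fun x _ => isOpen_ne

/-- Near every point, `S` is a finite sum of simple fractions plus a holomorphic function: the
fractions `w x / (x - z)` for `x` in a window centred at `0` and the holomorphic function on the
concentric disc of half its radius. This is what makes `S` meromorphic with poles in `L`. -/
def HasLocalPartialFractions (hL : ∀ a b : ℝ, (L ∩ Icc a b).Finite) (w : ℝ → ℂ) (S : ℂ → ℂ) :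
    Prop :=
  ∀ z, ∃ (R : ℝ) (G : ℂ → ℂ), z ∈ Metric.ball (0 : ℂ) (R / 2) ∧
    DifferentiableOn ℂ G (Metric.ball 0 (R / 2)) ∧
    ∀ y ∈ Metric.ball 0 (R / 2), S y = ∑ x ∈ window hL R, w x / ((x : ℂ) - y) + G y

theorem exists_hasLocalPartialFractions {R₀ : ℝ}
    (htail : ∀ R, R₀ ≤ R → HasHolomorphicLimitOn atTop
      (fun r z => ∑ x ∈ window hL r with R < |x|, w x / ((x : ℂ) - z)) (Metric.ball 0 (R / 2))) :
    ∃ S : ℂ → ℂ, HasLocalPartialFractions hL w S ∧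
      ∀ z, Tendsto (fun r => ∑ x ∈ window hL r, w x / ((x : ℂ) - z)) atTop (𝓝 (S z)) := by
  have hlocal : ∀ R, R₀ ≤ R → ∃ G, DifferentiableOn ℂ G (Metric.ball 0 (R / 2)) ∧
      ∀ z ∈ Metric.ball (0 : ℂ) (R / 2),
        Tendsto (fun r => ∑ x ∈ window hL r, w x / ((x : ℂ) - z)) atTop
          (𝓝 (∑ x ∈ window hL R, w x / ((x : ℂ) - z) + G z)) := by
    intro R hR
    obtain ⟨G, hG, hlim⟩ := htail R hR
    refine ⟨G, hG, fun z hz => ((hlim z hz).const_add _).congr' ?_⟩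
    filter_upwards [eventually_ge_atTop R] with r hr
    rw [← filter_window_not_lt_abs hr, add_comm, Finset.sum_filter_add_sum_filter_not]
  have hradius : ∀ z : ℂ, ∃ R, R₀ ≤ R ∧ z ∈ Metric.ball (0 : ℂ) (R / 2) := fun z =>
    ⟨|R₀| + 2 * ‖z‖ + 1, by linarith [le_abs_self R₀, norm_nonneg z], by
      rw [mem_ball_zero_iff]
      linarith [abs_nonneg R₀]⟩
  have hlim : ∀ z : ℂ, ∃ s,
      Tendsto (fun r => ∑ x ∈ window hL r, w x / ((x : ℂ) - z)) atTop (𝓝 s) := fun z =>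
    have ⟨R, hR, hz⟩ := hradius z
    have ⟨_, _, hG⟩ := hlocal R hR
    ⟨_, hG z hz⟩
  choose S hS using hlim
  refine ⟨S, fun z => ?_, hS⟩
  obtain ⟨R, hR, hz⟩ := hradius z
  obtain ⟨G, hG, hlimG⟩ := hlocal R hR
  exact ⟨R, G, hz, hG, fun y hy => tendsto_nhds_unique (hS y) (hlimG y hy)⟩

namespace HasLocalPartialFractions

theorem differentiableOn (hS : HasLocalPartialFractions hL w S) :
    DifferentiableOn ℂ S {z | ∀ x ∈ L, z ≠ x} := by
  intro z hz
  obtain ⟨R, G, hzR, hG, hSG⟩ := hS z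
  have hfin := (differentiableOn_sum_div_ofReal_sub (window hL R) w).differentiableAt
    ((isOpen_setOf_forall_ne_ofReal _).mem_nhds fun x hx => hz x (mem_window.1 hx).1)
  have hball := Metric.isOpen_ball.mem_nhds hzR
  exact ((hfin.add (hG.differentiableAt hball)).congr_of_eventuallyEq
    (Filter.eventually_of_mem hball hSG)).differentiableWithinAt

theorem exists_simplePole (hS : HasLocalPartialFractions hL w S) {p : ℝ} (hp : p ∈ L) :
    ∃ ε > (0 : ℝ), ∃ F : ℂ → ℂ, DifferentiableOn ℂ F (Metric.ball (p : ℂ) ε) ∧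
      ∀ z ∈ Metric.ball (p : ℂ) ε, S z = F z + w p / ((p : ℂ) - z) := by
  obtain ⟨R, G, hpR, hG, hSG⟩ := hS p
  have hp_window : p ∈ window hL R := by
    rw [mem_ball_zero_iff, Complex.norm_real, Real.norm_eq_abs] at hpR
    exact mem_window.2 ⟨hp, by linarith [abs_nonneg p]⟩
  have hp_others : (p : ℂ) ∈ {z : ℂ | ∀ x ∈ (window hL R).erase p, z ≠ x} := fun x hx h =>
    (Finset.mem_erase.1 hx).1 (Complex.ofReal_injective h).symm
  obtain ⟨ε, hε, hball⟩ := Metric.isOpen_iff.1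
    (Metric.isOpen_ball.inter (isOpen_setOf_forall_ne_ofReal _)) (p : ℂ) ⟨hpR, hp_others⟩
  refine ⟨ε, hε, fun z => ∑ x ∈ (window hL R).erase p, w x / ((x : ℂ) - z) + G z,
    ((differentiableOn_sum_div_ofReal_sub _ w).mono fun z hz => (hball hz).2).add
      (hG.mono fun z hz => (hball hz).1), fun z hz => ?_⟩
  rw [hSG z (hball hz).1, ← Finset.sum_erase_add _ _ hp_window]
  ring

end HasLocalPartialFractions

end PartialFractions

theorem weighted_stieltjes_exists_meromorphic_general
    (L : Set ℝ) (hLfin : ∀ a b : ℝ, (L ∩ Set.Icc a b).Finite)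
    (α : ℝ) (hα : α ∈ Set.Icc (-1 : ℝ) 1)
    (hsum : (∑' x : ↥{t | t ∈ L ∧ 1 < |t|}, ENNReal.ofReal (1 / |(x : ℝ)| ^ (1 + α))) ≠ ⊤)
    (hH : ∀ ℓ : ℝ, 1 ≤ ℓ → ∃ hℓ : ℝ,
      Tendsto (fun ℓ' : ℝ => ∑' x : ↥{t | t ∈ L ∧ ℓ < |t| ∧ |t| < ℓ'}, (1 / (x : ℝ)))
        atTop (𝓝 hℓ))
    (x0 : ℝ) (γ : ℤ → ℝ) (hγ : ∀ k, γ k ≠ 0)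
    (γbar c α' : ℝ) (hα'nonneg : 0 ≤ α') (hα' : (1 + α) * α' < 1)
    (hγsum1 : ∀ m : ℕ, 1 ≤ m →
      |(∑ k ∈ Finset.range m, γ (k : ℤ)) - γbar * (m : ℝ)| ≤ c * (m : ℝ) ^ α')
    (hγsum2 : ∀ m : ℕ, 1 ≤ m →
      |(∑ k ∈ Finset.range m, γ (-(k : ℤ) - 1)) - γbar * (m : ℝ)| ≤ c * (m : ℝ) ^ α') :
    ∃ S : ℂ → ℂ,
      (∀ z : ℂ, (∀ x ∈ L, z ≠ (x : ℂ)) →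
        Tendsto
          (fun ℓ : ℝ => ∑' x : ↥(L ∩ Set.Icc (-ℓ) ℓ),
            ((weightFun L x0 γ (x : ℝ) : ℝ) : ℂ) / (((x : ℝ) : ℂ) - z))
          atTop (𝓝 (S z)))
      ∧ DifferentiableOn ℂ S {z : ℂ | ∀ x ∈ L, z ≠ (x : ℂ)}
      ∧ ∀ x ∈ L, ∃ ε > (0 : ℝ), ∃ F : ℂ → ℂ,
          DifferentiableOn ℂ F (Metric.ball (x : ℂ) ε) ∧
          ∃ r : ℂ, r ≠ 0 ∧ ∀ z ∈ Metric.ball (x : ℂ) ε, z ≠ (x : ℂ) →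
            S z = F z + r / ((x : ℂ) - z) := by
  have hsummable : Summable fun x : ↥{t | t ∈ L ∧ 1 < |t|} => 1 / |(x : ℝ)| ^ (1 + α) :=
    (ENNReal.summable_toReal hsum).congr fun x => ENNReal.toReal_ofReal (by positivity)
  have htail : ∀ R, max 1 |x0| ≤ R → HasHolomorphicLimitOn atTop
      (fun r z => ∑ x ∈ window hLfin r with R < |x|, (weightFun L x0 γ x : ℂ) / ((x : ℂ) - z))
      (Metric.ball 0 (R / 2)) := by
    intro R hR
    obtain ⟨hR1, hx0R⟩ := max_le_iff.1 hR
    obtain ⟨h, hh⟩ := hH R hR1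
    exact hasHolomorphicLimitOn_sum_window_weightFun (by linarith [hα.1]) (by linarith [hα.2])
      hsummable hα'nonneg hα' hγsum1 hγsum2 hR1 hx0R (tendsto_sum_window_of_tendsto_tsum hh)
  obtain ⟨S, hS, hlim⟩ :=
    exists_hasLocalPartialFractions (w := fun x => (weightFun L x0 γ x : ℂ)) htail
  refine ⟨S, fun z _ => (hlim z).congr fun r => ?_, hS.differentiableOn, fun p hp => ?_⟩
  · rw [← coe_window (hL := hLfin), Finset.tsum_subtype' (window hLfin r)
      fun x : ℝ => (weightFun L x0 γ x : ℂ) / ((x : ℂ) - z)]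
  · obtain ⟨ε, hε, F, hF, hSF⟩ := hS.exists_simplePole hp
    exact ⟨ε, hε, F, hF, weightFun L x0 γ p, Complex.ofReal_ne_zero.2 (hγ _),
      fun z hz _ => hSF z hz⟩

/-- Existence and meromorphy of the principal-value Stieltjes transform
`S(z) = lim_{ℓ→∞} ∫_{[-ℓ,ℓ]} 1/(λ-z) dΛ(λ)` of the weighted point measure `Λ`:
`S` is holomorphic off `L` and has a simple pole at every point of `L`. -/
theorem weighted_stieltjes_exists_meromorphic
    (L : Set ℝ) (hLfin : ∀ a b : ℝ, (L ∩ Set.Icc a b).Finite)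
    (α : ℝ) (hα : α ∈ Set.Ioo (0 : ℝ) 1)
    (τ : ℝ → ℝ) (hτpos : ∀ ℓ : ℝ, 1 ≤ ℓ → 0 < τ ℓ)
    (hτ : ∀ ℓ : ℝ, 1 ≤ ℓ →
      (∑' x : ↥{t | t ∈ L ∧ ℓ < |t|}, ENNReal.ofReal (1 / |(x : ℝ)| ^ (1 + α)))
        ≤ ENNReal.ofReal (τ ℓ))
    (hH : ∀ ℓ : ℝ, 1 ≤ ℓ → ∃ hℓ : ℝ,
      Tendsto (fun ℓ' : ℝ => ∑' x : ↥{t | t ∈ L ∧ ℓ < |t| ∧ |t| < ℓ'}, (1 / (x : ℝ)))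
        atTop (𝓝 hℓ))
    (x0 : ℝ) (hx0 : x0 ∉ L)
    (γ : ℤ → ℝ) (hγpos : ∀ k, 0 < γ k)
    (γbar c α' : ℝ) (hγbar : 0 < γbar) (hc : 0 < c)
    (hα'pos : 0 < α') (hα' : (1 + α) * α' < 1)
    (hγsum1 : ∀ m : ℕ, 1 ≤ m →
      |(∑ k ∈ Finset.range m, γ (k : ℤ)) - γbar * (m : ℝ)| ≤ c * (m : ℝ) ^ α')
    (hγsum2 : ∀ m : ℕ, 1 ≤ m →
      |(∑ k ∈ Finset.range m, γ (-(k : ℤ) - 1)) - γbar * (m : ℝ)| ≤ c * (m : ℝ) ^ α') :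
    ∃ S : ℂ → ℂ,
      (∀ z : ℂ, (∀ x ∈ L, z ≠ (x : ℂ)) →
        Tendsto
          (fun ℓ : ℝ => ∑' x : ↥(L ∩ Set.Icc (-ℓ) ℓ),
            ((weightFun L x0 γ (x : ℝ) : ℝ) : ℂ) / (((x : ℝ) : ℂ) - z))
          atTop (𝓝 (S z)))
      ∧ DifferentiableOn ℂ S {z : ℂ | ∀ x ∈ L, z ≠ (x : ℂ)}
      ∧ ∀ x ∈ L, ∃ ε > (0 : ℝ), ∃ F : ℂ → ℂ,
          DifferentiableOn ℂ F (Metric.ball (x : ℂ) ε) ∧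
          ∃ r : ℂ, r ≠ 0 ∧ ∀ z ∈ Metric.ball (x : ℂ) ε, z ≠ (x : ℂ) →
            S z = F z + r / ((x : ℂ) - z) := by
  exact weighted_stieltjes_exists_meromorphic_general L hLfin α ⟨by linarith [hα.1], hα.2.le⟩
    (ne_top_of_le_ne_top ENNReal.ofReal_ne_top (hτ 1 le_rfl)) hH x0 γ (fun k => (hγpos k).ne')
    γbar c α' hα'pos.le hα' hγsum1 hγsum2
end

section
/- Let L and L' be locally finite subsets of ℝ whose points strictly interlace: between any two consecutive points of L there is exactly one point of L', and between any two consecutive points of L' there is exactly one point of L. Let Ξ and Ξ' be the counting measures of L and L'. Then for every α ∈ (0,1) and every ℓ ≥ 1: ∫_ℝ 1(|λ| > ℓ)/|λ|^{1+α} dΞ'(λ) ≤ 2/ℓ + ∫_ℝ 1(|λ| > ℓ)/|λ|^{1+α} dΞ(λ), and for all ℓ'' > ℓ' ≥ 1: |∫_ℝ 1(ℓ' ≤ |λ| < ℓ'')/|λ| dΞ'(λ) − ∫_ℝ 1(ℓ' ≤ |λ| < ℓ'')/|λ| dΞ(λ)| ≤ 4/ℓ'. -/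
open Filter Set Topology

open scoped ENNReal Pointwise

/-!
Let `B` meet every gap of `A`. Sending a point `x` of `A` to a point of `B` between `x` and its
predecessor in `A` is injective and moves points to the left. Hence, for a decreasing weight on an
interval, the sum over `A` exceeds the sum over `B` by at most the weight of the only point without
a predecessor. A decreasing weight of `|x|` decreases on the positive half-line and increases on the
negative one, so by order reversal each half-line contributes one such error term. Exchanging `A`
and `B` turns the one-sided estimate into a bound on the difference.
-/

section LinearOrder

variable {α : Type*} [LinearOrder α] {A B S : Set α}

/-- Local finiteness of a subset of a linear order, phrased through closed intervals so that no
topology is involved; for subsets of `ℝ` it is the usual notion. -/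
def IsIntervalFinite (A : Set α) : Prop :=
  ∀ a b : α, (A ∩ Icc a b).Finite

/-- `B` has a point strictly between any two consecutive points of `A`. Strict interlacing of `A`
and `B` is this relation in both directions. -/
def MeetsGaps (B A : Set α) : Prop :=
  ∀ a ∈ A, ∀ b ∈ A, a < b → A ∩ Ioo a b = ∅ → (B ∩ Ioo a b).Nonempty

theorem IsIntervalFinite.dual (hA : IsIntervalFinite A) :
    IsIntervalFinite (OrderDual.ofDual ⁻¹' A) := fun a b =>
  (hA b.ofDual a.ofDual).subset fun _ hx => ⟨hx.1, hx.2.2, hx.2.1⟩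

theorem MeetsGaps.dual (hBA : MeetsGaps B A) :
    MeetsGaps (OrderDual.ofDual ⁻¹' B) (OrderDual.ofDual ⁻¹' A) := by
  intro a ha b hb hab hgap
  obtain ⟨y, hyB, hby, hya⟩ := hBA b.ofDual hb a.ofDual ha hab <|
    eq_empty_of_forall_notMem fun z hz => notMem_empty (OrderDual.toDual z) <|
      hgap ▸ ⟨hz.1, hz.2.2, hz.2.1⟩
  exact ⟨OrderDual.toDual y, hyB, hya, hby⟩

theorem IsIntervalFinite.exists_pred (hA : IsIntervalFinite A) {a x : α} (ha : a ∈ A)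
    (hax : a < x) : ∃ p ∈ A ∩ Ico a x, ∀ z ∈ A, z < x → z ≤ p := by
  obtain ⟨p, hp, hmax⟩ := exists_max_image (A ∩ Ico a x) id
    ((hA a x).subset (inter_subset_inter_right A Ico_subset_Icc_self)) ⟨a, ha, le_rfl, hax⟩
  refine ⟨p, hp, fun z hzA hzx => ?_⟩
  rcases le_total a z with haz | hza
  · exact hmax z ⟨hzA, haz, hzx⟩
  · exact hza.trans hp.2.1

theorem MeetsGaps.exists_mem_Ioo (hBA : MeetsGaps B A) (hA : IsIntervalFinite A) {a x : α}
    (ha : a ∈ A) (hx : x ∈ A) (hax : a < x) :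
    ∃ y ∈ B ∩ Ioo a x, ∀ z ∈ A, z < x → z < y := by
  obtain ⟨p, ⟨hpA, hap, hpx⟩, hp⟩ := hA.exists_pred ha hax
  have hgap : A ∩ Ioo p x = ∅ :=
    eq_empty_of_forall_notMem fun z hz => (hp z hz.1 hz.2.2).not_gt hz.2.1
  obtain ⟨y, hyB, hpy, hyx⟩ := hBA p hpA x hx hpx hgap
  exact ⟨y, ⟨hyB, hap.trans_lt hpy, hyx⟩, fun z hzA hzx => (hp z hzA hzx).trans_lt hpy⟩

theorem MeetsGaps.exists_strictMono_lt (hBA : MeetsGaps B A) (hA : IsIntervalFinite A)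
    (hS : S.OrdConnected) :
    ∃ φ : ↥((A ∩ S) \ lowerBounds (A ∩ S)) → ↥(B ∩ S), StrictMono φ ∧ ∀ x, (φ x : α) < x := by
  have hleft (x : ↥((A ∩ S) \ lowerBounds (A ∩ S))) :
      ∃ y : ↥(B ∩ S), (y : α) < x ∧ ∀ z ∈ A, z < (x : α) → z < y := by
    obtain ⟨x, ⟨hxA, hxS⟩, hx⟩ := x
    obtain ⟨a, ⟨haA, haS⟩, hax⟩ : ∃ a ∈ A ∩ S, a < x := by
      simpa [lowerBounds, and_assoc] using hx
    obtain ⟨y, ⟨hyB, hay, hyx⟩, hy⟩ := hBA.exists_mem_Ioo hA haA hxA hax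
    exact ⟨⟨y, hyB, hS.out haS hxS ⟨hay.le, hyx.le⟩⟩, hyx, hy⟩
  choose φ hφ_lt lt_hφ using hleft
  exact ⟨φ, fun x x' hxx' => (hφ_lt x).trans (lt_hφ x' x x.2.1.1 hxx'), hφ_lt⟩

theorem subsingleton_inter_lowerBounds (A : Set α) : (A ∩ lowerBounds A).Subsingleton :=
  fun _ hx _ hy => IsLeast.unique hx hy

theorem tsum_le_of_subsingleton {β : Type*} {s : Set β} (hs : s.Subsingleton)
    {g : β → ℝ≥0∞} {C : ℝ≥0∞} (hC : ∀ x ∈ s, g x ≤ C) : ∑' x : s, g x ≤ C := by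
  rcases hs.eq_empty_or_singleton with rfl | ⟨x, rfl⟩
  · simp
  · simpa using hC

theorem MeetsGaps.tsum_inter_le_of_antitoneOn (hBA : MeetsGaps B A) (hA : IsIntervalFinite A)
    (hS : S.OrdConnected) {g : α → ℝ≥0∞} (hg : AntitoneOn g S) {C : ℝ≥0∞}
    (hC : ∀ x ∈ S, g x ≤ C) :
    ∑' x : ↥(A ∩ S), g x ≤ C + ∑' x : ↥(B ∩ S), g x := by
  obtain ⟨φ, hφ, hφ_lt⟩ := hBA.exists_strictMono_lt hA hS
  calc ∑' x : ↥(A ∩ S), g x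
      = ∑' x : ↥((A ∩ S) ∩ lowerBounds (A ∩ S) ∪ (A ∩ S) \ lowerBounds (A ∩ S)), g x := by
        rw [inter_union_sdiff]
    _ ≤ ∑' x : ↥((A ∩ S) ∩ lowerBounds (A ∩ S)), g x
          + ∑' x : ↥((A ∩ S) \ lowerBounds (A ∩ S)), g x := ENNReal.tsum_union_le g _ _
    _ ≤ C + ∑' x : ↥((A ∩ S) \ lowerBounds (A ∩ S)), g (φ x) := by
        gcongr with x
        · exact tsum_le_of_subsingleton (subsingleton_inter_lowerBounds _)
            fun x hx => hC x hx.1.2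
        · exact hg (φ x).2.2 x.2.1.2 (hφ_lt x).le
    _ ≤ C + ∑' x : ↥(B ∩ S), g x := by
        gcongr
        exact ENNReal.tsum_comp_le_tsum_of_injective hφ.injective fun y : ↥(B ∩ S) => g y

theorem MeetsGaps.tsum_inter_le_of_monotoneOn (hBA : MeetsGaps B A) (hA : IsIntervalFinite A)
    (hS : S.OrdConnected) {g : α → ℝ≥0∞} (hg : MonotoneOn g S) {C : ℝ≥0∞}
    (hC : ∀ x ∈ S, g x ≤ C) :
    ∑' x : ↥(A ∩ S), g x ≤ C + ∑' x : ↥(B ∩ S), g x :=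
  hBA.dual.tsum_inter_le_of_antitoneOn hA.dual hS.dual hg.dual_left hC

end LinearOrder

theorem tsum_le_add_tsum_of_ennreal_ofReal {ι κ : Type*} {u : ι → ℝ} {v : κ → ℝ} {c : ℝ}
    (hu : Summable u) (hv : Summable v) (hu_nonneg : ∀ i, 0 ≤ u i) (hv_nonneg : ∀ k, 0 ≤ v k)
    (hc : 0 ≤ c)
    (h : ∑' i, ENNReal.ofReal (u i) ≤ ENNReal.ofReal c + ∑' k, ENNReal.ofReal (v k)) :
    ∑' i, u i ≤ c + ∑' k, v k := by
  have hv_tsum : 0 ≤ ∑' k, v k := tsum_nonneg hv_nonneg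
  rwa [← ENNReal.ofReal_tsum_of_nonneg hu_nonneg hu,
    ← ENNReal.ofReal_tsum_of_nonneg hv_nonneg hv, ← ENNReal.ofReal_add hc hv_tsum,
    ENNReal.ofReal_le_ofReal_iff (add_nonneg hc hv_tsum)] at h

section OrderedGroup

variable {G : Type*} [AddCommGroup G] [LinearOrder G] [IsOrderedAddMonoid G] {A B S : Set G}

theorem preimage_abs_eq_union_neg (hS : S ⊆ Ioi 0) : abs ⁻¹' S = S ∪ -S := by
  ext t
  simp only [mem_preimage, mem_union, Set.mem_neg]
  constructor
  · intro ht
    rcases abs_choice t with h | h <;> rw [h] at ht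
    exacts [Or.inl ht, Or.inr ht]
  · rintro (ht | ht)
    · rwa [abs_of_pos (hS ht)]
    · rwa [abs_of_neg (neg_pos.mp (hS ht))]

theorem disjoint_neg_of_subset_Ioi_zero (hS : S ⊆ Ioi 0) : Disjoint S (-S) :=
  disjoint_left.mpr fun _ ht ht' => lt_asymm (hS ht) (neg_pos.mp (hS ht'))

theorem tsum_inter_preimage_abs (A : Set G) (hS : S ⊆ Ioi 0) (f : G → ℝ≥0∞) :
    ∑' x : ↥(A ∩ abs ⁻¹' S), f x = ∑' x : ↥(A ∩ S), f x + ∑' x : ↥(A ∩ -S), f x := by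
  rw [preimage_abs_eq_union_neg hS, inter_union_distrib_left]
  exact ENNReal.summable.tsum_union_disjoint
    ((disjoint_neg_of_subset_Ioi_zero hS).mono inter_subset_right inter_subset_right)
    ENNReal.summable

theorem MeetsGaps.tsum_inter_preimage_abs_le (hBA : MeetsGaps B A) (hA : IsIntervalFinite A)
    (hS : S.OrdConnected) (hS_pos : S ⊆ Ioi 0) {g : G → ℝ≥0∞} (hg : AntitoneOn g S) {C : ℝ≥0∞}
    (hC : ∀ x ∈ S, g x ≤ C) :
    ∑' x : ↥(A ∩ abs ⁻¹' S), g |(x : G)|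
      ≤ 2 * C + ∑' x : ↥(B ∩ abs ⁻¹' S), g |(x : G)| := by
  have habs : ∀ x ∈ S, |x| = x := fun x hx => abs_of_pos (hS_pos hx)
  have habs_neg : ∀ x ∈ -S, |x| = -x := fun x hx => abs_of_neg (neg_pos.mp (hS_pos hx))
  have hanti : AntitoneOn (fun x => g |x|) S := hg.congr fun x hx => by rw [habs x hx]
  have hmono : MonotoneOn (fun x => g |x|) (-S) := fun x hx y hy hxy => by
    simpa only [habs_neg x hx, habs_neg y hy] using hg hy hx (neg_le_neg hxy)
  have hnegS : (-S).OrdConnected := ⟨fun x hx y hy z hz =>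
    hS.out hy hx ⟨neg_le_neg hz.2, neg_le_neg hz.1⟩⟩
  rw [tsum_inter_preimage_abs A hS_pos (fun x => g |x|),
    tsum_inter_preimage_abs B hS_pos (fun x => g |x|), two_mul, add_add_add_comm]
  gcongr
  · exact hBA.tsum_inter_le_of_antitoneOn hA hS hanti fun x hx => (habs x hx).symm ▸ hC x hx
  · exact hBA.tsum_inter_le_of_monotoneOn hA hnegS hmono fun x hx =>
      (habs_neg x hx).symm ▸ hC (-x) hx

theorem IsIntervalFinite.finite_inter_preimage_abs (hA : IsIntervalFinite A) (hS : BddAbove S) :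
    (A ∩ abs ⁻¹' S).Finite := by
  obtain ⟨R, hR⟩ := hS
  exact (hA (-R) R).subset fun x hx => ⟨hx.1, abs_le.mp (hR hx.2)⟩

variable {g : G → ℝ} {r : G}

theorem MeetsGaps.tsum_ofReal_inter_preimage_abs_le (hBA : MeetsGaps B A)
    (hA : IsIntervalFinite A) (hr : 0 < r) (hS : S.OrdConnected) (hSr : S ⊆ Ici r)
    (hg : AntitoneOn g (Ici r)) :
    ∑' x : ↥(A ∩ abs ⁻¹' S), ENNReal.ofReal (g |(x : G)|)
      ≤ ENNReal.ofReal (2 * g r) + ∑' x : ↥(B ∩ abs ⁻¹' S), ENNReal.ofReal (g |(x : G)|) := by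
  rw [ENNReal.ofReal_mul zero_le_two, ENNReal.ofReal_ofNat]
  exact hBA.tsum_inter_preimage_abs_le hA hS (fun t ht => hr.trans_le (hSr ht))
    (g := fun t => ENNReal.ofReal (g t))
    (ENNReal.ofReal_mono.comp_antitoneOn (hg.mono hSr))
    fun t ht => ENNReal.ofReal_le_ofReal (hg self_mem_Ici (hSr ht) (hSr ht))

theorem MeetsGaps.tsum_real_inter_preimage_abs_le (hBA : MeetsGaps B A)
    (hA : IsIntervalFinite A) (hB : IsIntervalFinite B) (hr : 0 < r) (hS : S.OrdConnected)
    (hSr : S ⊆ Ici r) (hS_bdd : BddAbove S) (hg : AntitoneOn g (Ici r))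
    (hg_nonneg : ∀ t ∈ Ici r, 0 ≤ g t) :
    ∑' x : ↥(A ∩ abs ⁻¹' S), g |(x : G)|
      ≤ 2 * g r + ∑' x : ↥(B ∩ abs ⁻¹' S), g |(x : G)| := by
  have := (hA.finite_inter_preimage_abs hS_bdd).to_subtype
  have := (hB.finite_inter_preimage_abs hS_bdd).to_subtype
  exact tsum_le_add_tsum_of_ennreal_ofReal .of_finite .of_finite
    (fun x => hg_nonneg _ (hSr x.2.2)) (fun x => hg_nonneg _ (hSr x.2.2))
    (mul_nonneg zero_le_two (hg_nonneg r self_mem_Ici))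
    (hBA.tsum_ofReal_inter_preimage_abs_le hA hr hS hSr hg)

theorem interlacing_counting_comparison_general {L L' : Set G} (hL : IsIntervalFinite L)
    (hL' : IsIntervalFinite L') (hL'L : MeetsGaps L' L) (hLL' : MeetsGaps L L') (hr : 0 < r)
    (hS : S.OrdConnected) (hSr : S ⊆ Ici r) (hg : AntitoneOn g (Ici r))
    (hg_nonneg : ∀ t ∈ Ici r, 0 ≤ g t) :
    (∑' x : ↥(L' ∩ abs ⁻¹' S), ENNReal.ofReal (g |(x : G)|)
        ≤ ENNReal.ofReal (2 * g r) + ∑' x : ↥(L ∩ abs ⁻¹' S), ENNReal.ofReal (g |(x : G)|))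
      ∧ (BddAbove S → |(∑' x : ↥(L' ∩ abs ⁻¹' S), g |(x : G)|)
          - (∑' x : ↥(L ∩ abs ⁻¹' S), g |(x : G)|)| ≤ 2 * g r) := by
  refine ⟨hLL'.tsum_ofReal_inter_preimage_abs_le hL' hr hS hSr hg, fun hS_bdd => ?_⟩
  exact abs_sub_le_iff.mpr
    ⟨sub_le_iff_le_add.mpr
      (hLL'.tsum_real_inter_preimage_abs_le hL' hL hr hS hSr hS_bdd hg hg_nonneg),
    sub_le_iff_le_add.mpr
      (hL'L.tsum_real_inter_preimage_abs_le hL hL' hr hS hSr hS_bdd hg hg_nonneg)⟩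

end OrderedGroup

theorem antitoneOn_one_div {K : Type*} [Field K] [LinearOrder K] [IsStrictOrderedRing K] :
    AntitoneOn (fun t : K => 1 / t) (Ioi 0) := by
  simpa only [one_div] using inv_antitoneOn_Ioi

theorem antitoneOn_one_div_rpow {s : ℝ} (hs : 0 ≤ s) :
    AntitoneOn (fun t : ℝ => 1 / t ^ s) (Ioi 0) :=
  fun _ ht _ _ htu => one_div_le_one_div_of_le (Real.rpow_pos_of_pos ht s)
    (Real.rpow_le_rpow (le_of_lt ht) htu hs)

/-- Comparison of the counting measures of two strictly interlacing locally finite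
sets `L` and `L'`: for `α ∈ (0,1)` and `ℓ ≥ 1`,
`∫ 1(|λ|>ℓ)/|λ|^{1+α} dΞ' ≤ 2/ℓ + ∫ 1(|λ|>ℓ)/|λ|^{1+α} dΞ`, and for `ℓ'' > ℓ' ≥ 1`,
`|∫ 1(ℓ'≤|λ|<ℓ'')/|λ| dΞ' − ∫ 1(ℓ'≤|λ|<ℓ'')/|λ| dΞ| ≤ 4/ℓ'`. -/
theorem interlacing_counting_comparison
    (L L' : Set ℝ)
    (hLfin : ∀ a b : ℝ, (L ∩ Set.Icc a b).Finite)
    (hL'fin : ∀ a b : ℝ, (L' ∩ Set.Icc a b).Finite)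
    (hinter1 : ∀ a ∈ L, ∀ b ∈ L, a < b → L ∩ Set.Ioo a b = ∅ →
      ∃! x : ℝ, x ∈ L' ∩ Set.Ioo a b)
    (hinter2 : ∀ a ∈ L', ∀ b ∈ L', a < b → L' ∩ Set.Ioo a b = ∅ →
      ∃! x : ℝ, x ∈ L ∩ Set.Ioo a b) :
    ∀ α ∈ Set.Ioo (0 : ℝ) 1, ∀ ℓ : ℝ, 1 ≤ ℓ →
      ((∑' x : ↥{t | t ∈ L' ∧ ℓ < |t|}, ENNReal.ofReal (1 / |(x : ℝ)| ^ (1 + α)))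
        ≤ ENNReal.ofReal (2 / ℓ)
          + (∑' x : ↥{t | t ∈ L ∧ ℓ < |t|}, ENNReal.ofReal (1 / |(x : ℝ)| ^ (1 + α))))
      ∧ ∀ ℓ' ℓ'' : ℝ, 1 ≤ ℓ' → ℓ' < ℓ'' →
          |(∑' x : ↥{t | t ∈ L' ∧ ℓ' ≤ |t| ∧ |t| < ℓ''}, (1 / |(x : ℝ)|))
            - (∑' x : ↥{t | t ∈ L ∧ ℓ' ≤ |t| ∧ |t| < ℓ''}, (1 / |(x : ℝ)|))| ≤ 4 / ℓ' := by
  have hL'L : MeetsGaps L' L := fun a ha b hb hab h => (hinter1 a ha b hb hab h).exists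
  have hLL' : MeetsGaps L L' := fun a ha b hb hab h => (hinter2 a ha b hb hab h).exists
  refine fun α hα ℓ hℓ => ⟨?_, fun ℓ' ℓ'' hℓ' _ => ?_⟩
  · have hℓ_pos : 0 < ℓ := one_pos.trans_le hℓ
    have hα_one : 1 ≤ 1 + α := le_add_of_nonneg_right hα.1.le
    have hweight : 2 * (1 / ℓ ^ (1 + α)) ≤ 2 / ℓ := by
      rw [mul_one_div]
      gcongr
      exact Real.self_le_rpow_of_one_le hℓ hα_one
    have h := interlacing_counting_comparison_general hLfin hL'fin hL'L hLL' (S := Ioi ℓ) hℓ_pos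
      ordConnected_Ioi Ioi_subset_Ici_self
      ((antitoneOn_one_div_rpow (zero_le_one.trans hα_one)).mono (Ici_subset_Ioi.mpr hℓ_pos))
      fun t ht => one_div_nonneg.mpr (Real.rpow_nonneg (hℓ_pos.le.trans ht) _)
    exact h.1.trans (add_le_add_left (ENNReal.ofReal_le_ofReal hweight) _)
  · have hℓ'_pos : 0 < ℓ' := one_pos.trans_le hℓ'
    have h := interlacing_counting_comparison_general hLfin hL'fin hL'L hLL' (S := Ico ℓ' ℓ'')
      hℓ'_pos ordConnected_Ico Ico_subset_Ici_self
      (antitoneOn_one_div.mono (Ici_subset_Ioi.mpr hℓ'_pos))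
      fun t ht => one_div_nonneg.mpr (hℓ'_pos.le.trans ht)
    exact (h.2 bddAbove_Ico).trans (by rw [mul_one_div]; gcongr; norm_num)
end
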